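/- Fix reals ρ > 0 and θ > 0 and natural numbers n* ≥ 1, and define Q̂_n = (n!/n*!) ρ^{n*−n} F_n(θ)/F_{n*}(θ) for 0 ≤ n ≤ n* (note F_{n*}(θ) > 0). Then Q̂_{n*} = 1, ρ Q̂_1 = (ρ+θ) Q̂_0, and (ρ+n+θ) Q̂_n = ρ Q̂_{n+1} + n Q̂_{n−1} for all 1 ≤ n ≤ n*−1. -/

import Mathlib

open Finset

/-- F_n(θ) = Σ_{ℓ=0}^{n} [ρ^{n−ℓ}/((n−ℓ)! ℓ!)] (θ)_ℓ, with (θ)_ℓ the rising factorial. -/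
noncomputable def erlF (ρ θ : ℝ) (n : ℕ) : ℝ :=
  ∑ ℓ ∈ Finset.range (n + 1),
    ρ ^ (n - ℓ) / ((n - ℓ).factorial * ℓ.factorial) * (ascPochhammer ℝ ℓ).eval θ

open PowerSeries in
lemma erlF_coeff (ρ θ : ℝ) (n : ℕ) :
    erlF ρ θ n = coeff n ((mk fun k => (ascPochhammer ℝ k).eval θ / (k.factorial : ℝ)) *
      (mk fun k => ρ ^ k / (k.factorial : ℝ)) : PowerSeries ℝ) := by
  rw [coeff_mul, Finset.Nat.sum_antidiagonal_eq_sum_range_succ_mk, erlF]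
  apply Finset.sum_congr rfl
  intro l _
  simp only [coeff_mk]
  have h1 : ((n - l).factorial : ℝ) ≠ 0 := by positivity
  have h2 : (l.factorial : ℝ) ≠ 0 := by positivity
  field_simp

open PowerSeries in
lemma erlF_series (ρ θ : ℝ) : ∃ F : PowerSeries ℝ, (∀ n, erlF ρ θ n = coeff n F) ∧
    derivative ℝ F - C ρ * F = C θ * F + X * (derivative ℝ F - C ρ * F) := by
  refine ⟨_, erlF_coeff ρ θ, ?_⟩
  set B : PowerSeries ℝ := mk fun k => (ascPochhammer ℝ k).eval θ / (k.factorial : ℝ) with hB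
  set A : PowerSeries ℝ := mk fun k => ρ ^ k / (k.factorial : ℝ) with hA
  have dA : derivative ℝ A = C ρ * A := by
    ext n
    rw [coeff_derivative, coeff_C_mul, hA, coeff_mk, coeff_mk, Nat.factorial_succ]
    have h2 : (n.factorial : ℝ) ≠ 0 := by positivity
    push_cast
    field_simp
    ring
  have hs : ∀ n : ℕ, (ascPochhammer ℝ (n+1)).eval θ / ((n+1).factorial : ℝ) * ((n:ℝ)+1)
      = (θ + n) * ((ascPochhammer ℝ n).eval θ / (n.factorial : ℝ)) := by
    intro n
    rw [ascPochhammer_succ_eval, Nat.factorial_succ]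
    have h2 : (n.factorial : ℝ) ≠ 0 := by positivity
    push_cast
    field_simp
  have dB : derivative ℝ B = C θ * B + X * derivative ℝ B := by
    ext n
    rw [map_add, coeff_C_mul, coeff_derivative, hB, coeff_mk, coeff_mk, hs]
    cases n with
    | zero => simp
    | succ m =>
      rw [coeff_succ_X_mul, coeff_derivative, coeff_mk]
      push_cast
      ring
  have dF : derivative ℝ (B * A) = B * derivative ℝ A + A * derivative ℝ B := by
    rw [Derivation.leibniz]; simp only [smul_eq_mul]
  rw [dF, dA]
  linear_combination A * dB

open PowerSeries in
lemma erlF_rec (ρ θ : ℝ) (n : ℕ) :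
    (ρ + (n + 1 : ℕ) + θ) * erlF ρ θ (n + 1) =
      ((n : ℝ) + 2) * erlF ρ θ (n + 2) + ρ * erlF ρ θ n := by
  obtain ⟨F, hF, h⟩ := erlF_series ρ θ
  have := congrArg (coeff (n + 1)) h
  simp only [map_add, map_sub, coeff_C_mul, coeff_succ_X_mul, coeff_derivative] at this
  simp only [hF]
  push_cast at this ⊢
  linear_combination -this

/-- Q̂_n = (n!/n*!) ρ^{n*−n} F_n(θ)/F_{n*}(θ) solves the
Laplace-transformed backward Kolmogorov system for the first passage time to level n*
of the M/M/∞ queue, and F_{n*}(θ) > 0. -/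
theorem mminf_first_passage_transform (ρ θ : ℝ) (hρ : 0 < ρ) (hθ : 0 < θ)
    (nst : ℕ) (hnst : 1 ≤ nst) (Q : ℕ → ℝ)
    (hQ : ∀ n : ℕ, n ≤ nst →
      Q n = (n.factorial : ℝ) / nst.factorial * ρ ^ (nst - n) * erlF ρ θ n
        / erlF ρ θ nst) :
    0 < erlF ρ θ nst
    ∧ Q nst = 1
    ∧ ρ * Q 1 = (ρ + θ) * Q 0
    ∧ ∀ n : ℕ, 1 ≤ n → n ≤ nst - 1 →
        (ρ + n + θ) * Q n = ρ * Q (n + 1) + (n : ℝ) * Q (n - 1) := by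
  have hpos : 0 < erlF ρ θ nst := by
    apply Finset.sum_pos
    · intro l _
      have := ascPochhammer_pos l θ hθ
      positivity
    · simp
  have hne := hpos.ne'
  have hf : (nst.factorial : ℝ) ≠ 0 := by positivity
  refine ⟨hpos, ?_, ?_, ?_⟩
  · rw [hQ nst le_rfl]
    simp
    field_simp
  · rw [hQ 1 hnst, hQ 0 (Nat.zero_le _)]
    obtain ⟨m, rfl⟩ := Nat.exists_eq_add_of_le' hnst
    have h0 : erlF ρ θ 0 = 1 := by simp [erlF]
    have h1 : erlF ρ θ 1 = ρ + θ := by simp [erlF, Finset.sum_range_succ]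
    rw [h0, h1]
    simp only [Nat.add_sub_cancel, Nat.sub_zero, Nat.factorial, pow_succ]
    push_cast
    ring
  · intro n h1 h2
    obtain ⟨k, rfl⟩ := Nat.exists_eq_add_of_le' h1
    obtain ⟨m, rfl⟩ : ∃ m, nst = m + (k + 2) := ⟨nst - (k + 2), by omega⟩
    have hr := erlF_rec ρ θ k
    rw [hQ (k + 1) (by omega), hQ (k + 1 + 1) (by omega), hQ (k + 1 - 1) (by omega)]
    have e1 : m + (k + 2) - (k + 1) = m + 1 := by omega
    have e2 : m + (k + 2) - (k + 1 + 1) = m := by omega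
    have e3 : m + (k + 2) - (k + 1 - 1) = m + 2 := by omega
    rw [e1, e2, e3]
    simp only [Nat.add_sub_cancel, Nat.factorial_succ k, Nat.factorial_succ (k + 1)]
    push_cast at hr ⊢
    linear_combination ((k : ℝ) + 1) * k.factorial / ((m + (k + 2)).factorial : ℝ) * ρ ^ (m + 1)
      / erlF ρ θ (m + (k + 2)) * hr
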